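/- Let H be a real Hilbert space, λ ∈ ℝ, and let (f_h) be a sequence of proper, λ-convex, lower semicontinuous functions f_h : H → (-∞,∞] that Mosco-converges to a proper, λ-convex, lower semicontinuous function f : H → (-∞,∞]. Let τ > 0 be admissible, i.e. τ < −1/λ if λ < 0, and let γ : [0,1] → H be absolutely continuous with I_f(γ) < ∞. Define γ_h^τ(t) := J_{f_h,τ}(γ(t)). Then each γ_h^τ is absolutely continuous and limsup_h ∫₀¹ (‖γ̇_h^τ(t)‖² + |∇f_h|²(γ_h^τ(t))) dt ≤ (1 + τλ)^{-2} ∫₀¹ (‖γ̇(t)‖² + |∇f|²(γ(t))) dt. -/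

import Mathlib

open Filter Topology MeasureTheory Set
open scoped ENNReal RealInnerProductSpace

noncomputable section

attribute [local instance] Classical.propDecidable

variable {H : Type*} [NormedAddCommGroup H] [InnerProductSpace ℝ H] [CompleteSpace H]

/-- `f : H → (-∞,∞]` is proper: not identically `⊤` (and it never takes the value `⊥`). -/
def ProperFn (f : H → EReal) : Prop :=
  (∃ x, f x ≠ ⊤) ∧ ∀ x, f x ≠ ⊥

/-- `f` is `λ`-convex: `x ↦ f x - (λ/2)‖x‖²` is convex, expressed via the perturbed
convexity inequality. -/
def LambdaConvex (lam : ℝ) (f : H → EReal) : Prop :=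
  ∀ x y : H, ∀ t : ℝ, 0 ≤ t → t ≤ 1 →
    f ((1 - t) • x + t • y)
      ≤ ((1 - t : ℝ) : EReal) * f x + ((t : ℝ) : EReal) * f y
        - ((lam / 2 * (t * (1 - t)) * ‖x - y‖ ^ 2 : ℝ) : EReal)

/-- The subdifferential of a `λ`-convex function at `x` (contained in the domain of `f`). -/
def subdiff (lam : ℝ) (f : H → EReal) (x : H) : Set H :=
  {p : H | f x ≠ ⊤ ∧
    ∀ y : H, f x + ((⟪p, y - x⟫ + lam / 2 * ‖y - x‖ ^ 2 : ℝ) : EReal) ≤ f y}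

/-- `∇f(x)`: the element of minimal norm of `∂f(x)` (junk value `0` if there is none). -/
def gradMin (lam : ℝ) (f : H → EReal) (x : H) : H :=
  if h : ∃ p ∈ subdiff lam f x, ∀ q ∈ subdiff lam f x, ‖p‖ ≤ ‖q‖ then h.choose else 0

/-- `|∇f|(x) ∈ [0,∞]`, equal to `+∞` when `∂f(x) = ∅` (in particular when `f x = ⊤`). -/
def gradNorm (lam : ℝ) (f : H → EReal) (x : H) : ℝ≥0∞ :=
  if (subdiff lam f x).Nonempty then ENNReal.ofReal ‖gradMin lam f x‖ else ⊤

/-- The resolvent `J_τ(x)`: the minimizer of `y ↦ f y + ‖y-x‖²/(2τ)` (junk `0` if none). -/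
def Jres (f : H → EReal) (τ : ℝ) (x : H) : H :=
  if h : ∃ y : H, ∀ z : H,
      f y + ((‖y - x‖ ^ 2 / (2 * τ) : ℝ) : EReal)
        ≤ f z + ((‖z - x‖ ^ 2 / (2 * τ) : ℝ) : EReal)
  then h.choose else 0

/-- The Moreau–Yosida regularization `f_τ(x) = min_y (f y + ‖y-x‖²/(2τ))`. -/
def moreau (f : H → EReal) (τ : ℝ) (x : H) : ℝ :=
  (f (Jres f τ x)).toReal + ‖Jres f τ x - x‖ ^ 2 / (2 * τ)

/-- `γ` is absolutely continuous on `[a,b]` with an integrable derivative. -/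
abbrev IsACCurve (a b : ℝ) (γ : ℝ → H) : Prop :=
  ∃ g : ℝ → H, IntegrableOn g (Icc a b) ∧ ∀ t ∈ Icc a b, γ t = γ a + ∫ s in a..t, g s

/-- The action `I_f^{[a,b]}(γ) = ∫_a^b (‖γ̇‖² + |∇f|²(γ)) dt ∈ [0,∞]`, set to `+∞` when `γ`
is not absolutely continuous. -/
def actionFn (lam : ℝ) (f : H → EReal) (a b : ℝ) (γ : ℝ → H) : ℝ≥0∞ :=
  if h : IsACCurve a b γ then
    ∫⁻ t in Ioc a b, (ENNReal.ofReal (‖h.choose t‖ ^ 2) + gradNorm lam f (γ t) ^ 2)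
  else ⊤

/-- `Θ_{f,x₀,x₁}`: the action on `[0,1]` with endpoint constraints. -/
def Theta (lam : ℝ) (f : H → EReal) (x0 x1 : H) (γ : ℝ → H) : ℝ≥0∞ :=
  if γ 0 = x0 ∧ γ 1 = x1 then actionFn lam f 0 1 γ else ⊤

/-- `Γ_δ(x₀,x_δ)`: infimum of the action over curves joining the endpoints. -/
def GammaInf (lam : ℝ) (f : H → EReal) (δ : ℝ) (x0 xδ : H) : ℝ≥0∞ :=
  ⨅ (γ : ℝ → H) (_ : γ 0 = x0 ∧ γ δ = xδ), actionFn lam f 0 δ γ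

/-- Mosco convergence of `fh` to `f`: recovery sequences for the strong topology, and the
`liminf` inequality along weakly convergent sequences. -/
def Mosco (fh : ℕ → H → EReal) (f : H → EReal) : Prop :=
  (∀ x : H, ∃ xh : ℕ → H, Tendsto xh atTop (𝓝 x) ∧
      Filter.limsup (fun h => fh h (xh h)) atTop ≤ f x) ∧
  (∀ (xh : ℕ → H) (x : H),
      (∀ p : H, Tendsto (fun h => ⟪xh h, p⟫) atTop (𝓝 ⟪x, p⟫)) →
      f x ≤ Filter.liminf (fun h => fh h (xh h)) atTop)

/-!
When `1 + τλ > 0` the penalized functional `y ↦ f y + ‖y - x‖² / (2τ)` is `(λ + 1/τ)`-convex with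
positive modulus, so its minimizer `J x` exists, and monotonicity of `∂f` makes `J` Lipschitz with
constant `(1 + τλ)⁻¹`. Hence `J ∘ γ` is dominated by a real absolutely continuous function, which in
a Hilbert space suffices for an integrable velocity, and its speed is at most `(1 + τλ)⁻¹ ‖γ̇‖`.

The Yosida vector `(x - J x) / τ` is a subgradient at `J x`, so it bounds `|∇f|(J x)`. Mosco
convergence passes to the penalized functionals, whose uniform strong convexity upgrades weak
convergence of the minimizers to strong convergence `J_h x → J x`. By dominated convergence the
slope terms are asymptotically bounded by `∫ ‖γ - J γ‖² / τ²`, and monotonicity of `∂f` once more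
gives `‖x - J x‖ / τ ≤ (1 + τλ)⁻¹ |∇f|(x)`.
-/

section LambdaConvex

variable {E : Type*}

lemma ProperFn.exists_coe_eq {f : E → EReal} (hf : ProperFn f) {x : E} (hx : f x ≠ ⊤) :
    ∃ a : ℝ, f x = a :=
  ⟨(f x).toReal, (EReal.coe_toReal hx (hf.2 x)).symm⟩

variable [NormedAddCommGroup E] [InnerProductSpace ℝ E] {F : E → EReal} {μ : ℝ}

lemma LambdaConvex.le_coe (hF : LambdaConvex μ F) {x y : E} {a b t : ℝ} (hx : F x ≤ a)
    (hy : F y ≤ b) (ht0 : 0 ≤ t) (ht1 : t ≤ 1) :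
    F ((1 - t) • x + t • y) ≤
      (((1 - t) * a + t * b - μ / 2 * (t * (1 - t)) * ‖x - y‖ ^ 2 : ℝ) : EReal) := by
  refine (hF x y t ht0 ht1).trans ?_
  rw [EReal.coe_sub ((1 - t) * a + t * b), EReal.coe_add, EReal.coe_mul (1 - t),
    EReal.coe_mul t b]
  exact EReal.sub_le_sub (add_le_add
    (mul_le_mul_of_nonneg_left hx (EReal.coe_nonneg.2 (sub_nonneg.2 ht1)))
    (mul_le_mul_of_nonneg_left hy (EReal.coe_nonneg.2 ht0))) le_rfl

lemma LambdaConvex.norm_sub_sq_le_of_near_min (hF : LambdaConvex μ F) (hμ : 0 < μ) {y z : E}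
    {m ε : ℝ} (hm : ∀ w, (m : EReal) ≤ F w) (hy : F y ≤ (m + ε : ℝ)) (hz : F z ≤ (m + ε : ℝ)) :
    ‖y - z‖ ^ 2 ≤ 8 / μ * ε := by
  have h := (hm _).trans (hF.le_coe hy hz (t := 1 / 2) (by norm_num) (by norm_num))
  rw [EReal.coe_le_coe_iff] at h
  rw [div_mul_eq_mul_div, le_div_iff₀ hμ]
  linarith

/- The segment from `z` to `v` leaves the ball at a point where `F` is at least `m`; there
convexity compares the drop `M - m`, amplified linearly in `‖v - z‖`, with the quadratic gain. -/
lemma LambdaConvex.le_of_le_on_ball (hF : LambdaConvex μ F) (hμ : 0 < μ) {z : E} {m M r : ℝ}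
    (hr : 0 < r) (hz : F z ≤ M) (hm : ∀ w ∈ Metric.ball z r, (m : EReal) ≤ F w) (v : E) :
    ((m - 4 * (M - m) ^ 2 / (μ * r ^ 2) : ℝ) : EReal) ≤ F v := by
  have hmM : m ≤ M := EReal.coe_le_coe_iff.1 ((hm z (Metric.mem_ball_self hr)).trans hz)
  rcases lt_or_ge ‖z - v‖ r with hd | hd
  · refine le_trans ?_ (hm v (by rwa [mem_ball_iff_norm']))
    exact EReal.coe_le_coe_iff.2 (sub_le_self _ (by positivity))
  refine EReal.le_of_forall_lt_iff_le.1 fun b hb => EReal.coe_le_coe_iff.2 ?_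
  set d := ‖z - v‖
  have hd0 : 0 < d := hr.trans_le hd
  obtain ⟨t, ht⟩ : ∃ t, t = r / (2 * d) := ⟨_, rfl⟩
  have ht0 : 0 < t := by rw [ht]; positivity
  have htd : t * d = r / 2 := by rw [ht]; field_simp
  have ht1 : t ≤ 1 / 2 := by nlinarith
  have hball : (1 - t) • z + t • v ∈ Metric.ball z r := by
    have hsub : z - ((1 - t) • z + t • v) = t • (z - v) := by module
    rw [mem_ball_iff_norm', hsub, norm_smul, Real.norm_of_nonneg ht0.le, htd]
    linarith
  have hconv : m ≤ (1 - t) * M + t * b - μ / 2 * (t * (1 - t)) * d ^ 2 :=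
    EReal.coe_le_coe_iff.1
      ((hm _ hball).trans (hF.le_coe hz hb.le ht0.le (ht1.trans (by norm_num))))
  have hlin : (M - m) / t = 2 * (M - m) / r * d := by rw [ht]; field_simp
  have hquad : M - (M - m) / t + μ / 4 * d ^ 2 ≤ b := by
    have hgain : t * (μ / 4 * d ^ 2) ≤ μ / 2 * (t * (1 - t)) * d ^ 2 := by
      have : 0 ≤ μ * t * d ^ 2 * (1 / 2 - t) := by
        have := sub_nonneg.2 ht1
        positivity
      linarith
    have hcancel : t * ((M - m) / t) = M - m := by field_simp
    exact le_of_mul_le_mul_left (by linarith) ht0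
  have hsq : M - 4 * (M - m) ^ 2 / (μ * r ^ 2) ≤ M - (M - m) / t + μ / 4 * d ^ 2 := by
    have : M - (M - m) / t + μ / 4 * d ^ 2 - (M - 4 * (M - m) ^ 2 / (μ * r ^ 2))
        = μ / 4 * (d - 4 * (M - m) / (μ * r)) ^ 2 := by
      rw [hlin]; field_simp; ring
    have : 0 ≤ μ / 4 * (d - 4 * (M - m) / (μ * r)) ^ 2 := by positivity
    linarith
  linarith

lemma LambdaConvex.add_sq_le_of_forall_le (hF : LambdaConvex μ F) {y : E}
    (hy : ∀ z, F y ≤ F z) (z : E) : F y + ((μ / 2 * ‖z - y‖ ^ 2 : ℝ) : EReal) ≤ F z := by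
  by_cases hyb : F y = ⊥
  · rw [hyb, EReal.bot_add]; exact bot_le
  by_cases hzt : F z = ⊤
  · rw [hzt]; exact le_top
  have hyt : F y ≠ ⊤ := ne_top_of_le_ne_top hzt (hy z)
  have hzb : F z ≠ ⊥ := ne_bot_of_le_ne_bot hyb (hy z)
  obtain ⟨a, ha⟩ : ∃ a : ℝ, F y = a := ⟨_, (EReal.coe_toReal hyt hyb).symm⟩
  obtain ⟨b, hb⟩ : ∃ b : ℝ, F z = b := ⟨_, (EReal.coe_toReal hzt hzb).symm⟩
  have hsegment : ∀ t ∈ Ioo (0 : ℝ) 1, a + (1 - t) * (μ / 2 * ‖z - y‖ ^ 2) ≤ b := by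
    intro t ht
    have h := (hy _).trans (hF.le_coe ha.le hb.le ht.1.le ht.2.le)
    rw [ha, EReal.coe_le_coe_iff, norm_sub_rev] at h
    exact le_of_mul_le_mul_left (by linarith) ht.1
  have hlim : Tendsto (fun t : ℝ => a + (1 - t) * (μ / 2 * ‖z - y‖ ^ 2)) (𝓝[>] 0)
      (𝓝 (a + (1 - 0) * (μ / 2 * ‖z - y‖ ^ 2))) :=
    (Continuous.tendsto (by fun_prop) 0).mono_left nhdsWithin_le_nhds
  rw [ha, hb, ← EReal.coe_add, EReal.coe_le_coe_iff, ← one_mul (μ / 2 * _), ← sub_zero (1 : ℝ)]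
  exact le_of_tendsto hlim (eventually_of_mem (Ioo_mem_nhdsGT one_pos) hsegment)

lemma LambdaConvex.exists_forall_coe_le (hF : LambdaConvex μ F) (hμ : 0 < μ) (hp : ProperFn F)
    (hl : LowerSemicontinuous F) : ∃ m : ℝ, ∀ z, (m : EReal) ≤ F z := by
  obtain ⟨x, hx⟩ := hp.1
  obtain ⟨a, ha⟩ := hp.exists_coe_eq hx
  have hlt : ((a - 1 : ℝ) : EReal) < F x := by
    rw [ha]; exact EReal.coe_lt_coe_iff.2 (sub_one_lt a)
  obtain ⟨r, hr, hball⟩ := Metric.eventually_nhds_iff_ball.1 (hl x _ hlt)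
  exact ⟨_, hF.le_of_le_on_ball hμ hr ha.le fun w hw => (hball w hw).le⟩

theorem LambdaConvex.exists_forall_le [CompleteSpace E] (hF : LambdaConvex μ F) (hμ : 0 < μ)
    (hp : ProperFn F) (hl : LowerSemicontinuous F) : ∃ y, ∀ z, F y ≤ F z := by
  obtain ⟨m, hm⟩ := hF.exists_forall_coe_le hμ hp hl
  obtain ⟨x, hx⟩ := hp.1
  obtain ⟨I, hI⟩ : ∃ I : ℝ, ⨅ z, F z = I :=
    ⟨_, (EReal.coe_toReal (ne_top_of_le_ne_top hx (iInf_le F x))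
      (ne_bot_of_le_ne_bot (EReal.coe_ne_bot m) (le_iInf hm))).symm⟩
  have hIle : ∀ z, (I : EReal) ≤ F z := fun z => hI ▸ iInf_le F z
  have hex : ∀ n : ℕ, ∃ y, F y < ((I + 1 / (n + 1) : ℝ) : EReal) := fun n =>
    iInf_lt_iff.1 <| by
      rw [hI]; exact EReal.coe_lt_coe_iff.2 (lt_add_of_pos_right I Nat.one_div_pos_of_nat)
  choose y hy using hex
  have hyle : ∀ n N : ℕ, N ≤ n → F (y n) ≤ ((I + 1 / (N + 1) : ℝ) : EReal) := fun n N hn =>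
    (hy n).le.trans (EReal.coe_le_coe_iff.2 (by gcongr))
  have hcauchy : CauchySeq y := by
    refine cauchySeq_of_le_tendsto_0 (fun N : ℕ => √(8 / μ * (1 / (N + 1)))) ?_ ?_
    · intro n k N hn hk
      rw [dist_eq_norm]
      exact Real.le_sqrt_of_sq_le
        (hF.norm_sub_sq_le_of_near_min hμ hIle (hyle n N hn) (hyle k N hk))
    · simpa using (tendsto_one_div_add_atTop_nhds_zero_nat.const_mul (8 / μ)).sqrt
  obtain ⟨y₀, hy₀⟩ := cauchySeq_tendsto_of_complete hcauchy
  have hlim : Tendsto (fun n : ℕ => ((I + 1 / (n + 1) : ℝ) : EReal)) atTop (𝓝 (I : EReal)) :=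
    EReal.tendsto_coe.2 (by simpa using tendsto_one_div_add_atTop_nhds_zero_nat.const_add I)
  have hmin : F y₀ ≤ I := le_of_forall_lt_imp_le_of_dense fun c hc =>
    ge_of_tendsto hlim ((hy₀.eventually (hl y₀ c hc)).mono fun n hn => hn.le.trans (hy n).le)
  exact ⟨y₀, fun z => hmin.trans (hIle z)⟩

end LambdaConvex

section Subdifferential

variable {E : Type*} [NormedAddCommGroup E] [InnerProductSpace ℝ E]
  {f : E → EReal} {lam : ℝ} {x y p q : E}

lemma mem_subdiff_iff (hp : ProperFn f) {a : ℝ} (ha : f x = a) :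
    p ∈ subdiff lam f x ↔
      ∀ z : E, ∀ s : ℝ, f z = s → a + (⟪p, z - x⟫ + lam / 2 * ‖z - x‖ ^ 2) ≤ s := by
  constructor
  · intro h z s hs
    have hz := h.2 z
    rwa [ha, hs, ← EReal.coe_add, EReal.coe_le_coe_iff] at hz
  · refine fun h => ⟨ha ▸ EReal.coe_ne_top a, fun z => ?_⟩
    by_cases hz : f z = ⊤
    · rw [hz]; exact le_top
    obtain ⟨s, hs⟩ := hp.exists_coe_eq hz
    rw [ha, hs, ← EReal.coe_add, EReal.coe_le_coe_iff]
    exact h z s hs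

lemma mul_norm_sub_sq_le_inner_of_mem_subdiff (hf : ProperFn f) (hp : p ∈ subdiff lam f x)
    (hq : q ∈ subdiff lam f y) : lam * ‖x - y‖ ^ 2 ≤ ⟪p - q, x - y⟫ := by
  obtain ⟨a, ha⟩ := hf.exists_coe_eq hp.1
  obtain ⟨b, hb⟩ := hf.exists_coe_eq hq.1
  have hxy := (mem_subdiff_iff hf ha).1 hp y b hb
  have hyx := (mem_subdiff_iff hf hb).1 hq x a ha
  rw [norm_sub_rev, ← neg_sub x y, inner_neg_right] at hxy
  rw [inner_sub_left]
  linarith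

lemma mul_norm_sub_le_of_mem_subdiff (hf : ProperFn f) {τ : ℝ} (hτ : 0 ≤ τ)
    (hp : p ∈ subdiff lam f x) (hq : q ∈ subdiff lam f y) :
    (1 + τ * lam) * ‖x - y‖ ≤ ‖(x + τ • p) - (y + τ • q)‖ := by
  rcases (norm_nonneg (x - y)).eq_or_lt with hxy | hxy
  · rw [← hxy, mul_zero]; exact norm_nonneg _
  refine le_of_mul_le_mul_right ?_ hxy
  calc (1 + τ * lam) * ‖x - y‖ * ‖x - y‖
      = ‖x - y‖ ^ 2 + τ * (lam * ‖x - y‖ ^ 2) := by ring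
    _ ≤ ‖x - y‖ ^ 2 + τ * ⟪p - q, x - y⟫ := by
        gcongr; exact mul_norm_sub_sq_le_inner_of_mem_subdiff hf hp hq
    _ = ⟪(x - y) + τ • (p - q), x - y⟫ := by
        rw [inner_add_left, real_inner_smul_left, real_inner_self_eq_norm_sq]
    _ ≤ ‖(x - y) + τ • (p - q)‖ * ‖x - y‖ := real_inner_le_norm _ _
    _ = ‖(x + τ • p) - (y + τ • q)‖ * ‖x - y‖ := by congr 2; module

lemma isClosed_subdiff (hf : ProperFn f) : IsClosed (subdiff lam f x) := by
  by_cases hx : f x = ⊤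
  · have hempty : subdiff lam f x = ∅ := eq_empty_of_forall_notMem fun p hp => hp.1 hx
    rw [hempty]; exact isClosed_empty
  obtain ⟨a, ha⟩ := hf.exists_coe_eq hx
  have hset : subdiff lam f x = ⋂ (z : E) (s : ℝ) (_ : f z = s),
      {p : E | a + (⟪p, z - x⟫ + lam / 2 * ‖z - x‖ ^ 2) ≤ s} := by
    ext p
    simp only [mem_subdiff_iff hf ha, mem_iInter, mem_ofPred_eq]
  rw [hset]
  exact isClosed_iInter fun z => isClosed_iInter fun s => isClosed_iInter fun _ =>
    isClosed_le (by fun_prop) (by fun_prop)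

lemma convex_subdiff (hf : ProperFn f) : Convex ℝ (subdiff lam f x) := by
  intro p hp q hq s t hs ht hst
  obtain ⟨a, ha⟩ := hf.exists_coe_eq hp.1
  rw [mem_subdiff_iff hf ha] at hp hq ⊢
  intro z v hv
  have hcomb := add_le_add (mul_le_mul_of_nonneg_left (hp z v hv) hs)
    (mul_le_mul_of_nonneg_left (hq z v hv) ht)
  obtain rfl : t = 1 - s := by linarith
  rw [inner_add_left, real_inner_smul_left, real_inner_smul_left]
  linarith

lemma norm_gradMin_le (hp : p ∈ subdiff lam f x) : ‖gradMin lam f x‖ ≤ ‖p‖ := by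
  unfold gradMin
  split_ifs with hmin
  · exact hmin.choose_spec.2 p hp
  · rw [norm_zero]; exact norm_nonneg p

lemma gradMin_mem_subdiff [CompleteSpace E] (hf : ProperFn f) (hne : (subdiff lam f x).Nonempty) :
    gradMin lam f x ∈ subdiff lam f x := by
  obtain ⟨p, hp, hinf⟩ := exists_norm_eq_iInf_of_complete_convex hne
    (isClosed_subdiff hf).isComplete (convex_subdiff hf) 0
  have hmin : ∃ p ∈ subdiff lam f x, ∀ q ∈ subdiff lam f x, ‖p‖ ≤ ‖q‖ := by
    refine ⟨p, hp, fun q hq => ?_⟩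
    have hbdd : BddBelow (range fun w : subdiff lam f x => ‖(0 : E) - w‖) :=
      ⟨0, forall_mem_range.2 fun _ => norm_nonneg _⟩
    simpa only [zero_sub, norm_neg] using hinf.trans_le (ciInf_le hbdd ⟨q, hq⟩)
  rw [gradMin, dif_pos hmin]
  exact hmin.choose_spec.1

lemma gradNorm_le_enorm (hp : p ∈ subdiff lam f x) : gradNorm lam f x ≤ ‖p‖ₑ := by
  rw [gradNorm, if_pos ⟨p, hp⟩, ← ofReal_norm]
  exact ENNReal.ofReal_le_ofReal (norm_gradMin_le hp)

end Subdifferential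

section Resolvent

/-- The functional `y ↦ f y + ‖y - x‖² / (2τ)`, whose minimizer is the resolvent `Jres f τ x`. -/
def penalized {E : Type*} [NormedAddCommGroup E] (f : E → EReal) (τ : ℝ) (x y : E) : EReal :=
  f y + ((‖y - x‖ ^ 2 / (2 * τ) : ℝ) : EReal)

/-- The Yosida approximation `τ⁻¹ (x - J_τ x)` of `∇f`; it is a subgradient of `f` at the
resolvent `J_τ x`. -/
def yosida {E : Type*} [NormedAddCommGroup E] [NormedSpace ℝ E] (f : E → EReal) (τ : ℝ) (x : E) :
    E :=
  τ⁻¹ • (x - Jres f τ x)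

variable {E : Type*} [NormedAddCommGroup E] {f : E → EReal} {lam τ : ℝ}

lemma one_add_mul_pos_of_lt_neg_one_div (hτ : 0 < τ) (hadm : lam < 0 → τ < -1 / lam) :
    0 < 1 + τ * lam := by
  rcases lt_or_ge lam 0 with hlam | hlam
  · have := (lt_div_iff_of_neg hlam).1 (hadm hlam)
    linarith
  · positivity

lemma add_one_div_pos_of_one_add_mul_pos (hτ : 0 < τ) (hadm : 0 < 1 + τ * lam) :
    0 < lam + 1 / τ := by
  have : lam + 1 / τ = (1 + τ * lam) / τ := by field_simp; ring
  rw [this]; positivity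

lemma properFn_penalized (hp : ProperFn f) (x : E) : ProperFn (penalized f τ x) := by
  obtain ⟨⟨y, hy⟩, hbot⟩ := hp
  exact ⟨⟨y, EReal.add_ne_top hy (EReal.coe_ne_top _)⟩,
    fun z => EReal.add_ne_bot_iff.2 ⟨hbot z, EReal.coe_ne_bot _⟩⟩

lemma lowerSemicontinuous_penalized (hl : LowerSemicontinuous f) (x : E) :
    LowerSemicontinuous (penalized f τ x) := by
  have hcont : Continuous fun y : E => ((‖y - x‖ ^ 2 / (2 * τ) : ℝ) : EReal) :=
    continuous_coe_real_ereal.comp (by fun_prop)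
  exact hl.add' hcont.lowerSemicontinuous fun y =>
    EReal.continuousAt_add (Or.inr (EReal.coe_ne_bot _)) (Or.inr (EReal.coe_ne_top _))

variable [InnerProductSpace ℝ E]

lemma Jres_add_smul_yosida (f : E → EReal) (hτ : τ ≠ 0) (x : E) :
    Jres f τ x + τ • yosida f τ x = x := by
  rw [yosida, smul_inv_smul₀ hτ, add_sub_cancel]

lemma norm_segment_sub_sq (x y z : E) (t : ℝ) :
    ‖(1 - t) • y + t • z - x‖ ^ 2 =
      (1 - t) * ‖y - x‖ ^ 2 + t * ‖z - x‖ ^ 2 - t * (1 - t) * ‖y - z‖ ^ 2 := by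
  have hseg : (1 - t) • y + t • z - x = (1 - t) • (y - x) + t • (z - x) := by module
  rw [hseg, ← sub_sub_sub_cancel_right y z x, norm_add_sq_real, norm_sub_sq_real (y - x),
    norm_smul, norm_smul, mul_pow, mul_pow, Real.norm_eq_abs, Real.norm_eq_abs, sq_abs, sq_abs,
    real_inner_smul_left, real_inner_smul_right]
  ring

lemma lambdaConvex_penalized (hc : LambdaConvex lam f) (x : E) :
    LambdaConvex (lam + 1 / τ) (penalized f τ x) := by
  intro y z t ht0 ht1
  have hdistrib : ∀ {s : ℝ}, 0 ≤ s → ∀ (A : EReal) (q : ℝ),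
      (s : EReal) * (A + q) = s * A + ((s * q : ℝ) : EReal) := fun hs A q => by
    rw [EReal.left_distrib_of_nonneg_of_ne_top (EReal.coe_nonneg.2 hs) (EReal.coe_ne_top _),
      EReal.coe_mul]
  have hquad : -(lam / 2 * (t * (1 - t)) * ‖y - z‖ ^ 2)
        + ‖(1 - t) • y + t • z - x‖ ^ 2 / (2 * τ)
      = (1 - t) * (‖y - x‖ ^ 2 / (2 * τ)) + t * (‖z - x‖ ^ 2 / (2 * τ))
        + -((lam + 1 / τ) / 2 * (t * (1 - t)) * ‖y - z‖ ^ 2) := by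
    rw [norm_segment_sub_sq]; field_simp; ring
  calc penalized f τ x ((1 - t) • y + t • z)
      ≤ ((1 - t : ℝ) : EReal) * f y + (t : EReal) * f z
          - ((lam / 2 * (t * (1 - t)) * ‖y - z‖ ^ 2 : ℝ) : EReal)
          + ((‖(1 - t) • y + t • z - x‖ ^ 2 / (2 * τ) : ℝ) : EReal) :=
        add_le_add_left (hc y z t ht0 ht1) _
    _ = ((1 - t : ℝ) : EReal) * penalized f τ x y + (t : EReal) * penalized f τ x z
          - (((lam + 1 / τ) / 2 * (t * (1 - t)) * ‖y - z‖ ^ 2 : ℝ) : EReal) := by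
        rw [penalized, penalized, hdistrib (sub_nonneg.2 ht1), hdistrib ht0,
          add_add_add_comm, sub_eq_add_neg (_ : EReal), sub_eq_add_neg (_ : EReal), ← EReal.coe_neg,
          ← EReal.coe_neg, add_assoc, add_assoc (_ + _ : EReal), ← EReal.coe_add, ← EReal.coe_add,
          ← EReal.coe_add, hquad]

variable [CompleteSpace E]

lemma penalized_Jres_le (hp : ProperFn f) (hc : LambdaConvex lam f) (hl : LowerSemicontinuous f)
    (hτ : 0 < τ) (hadm : 0 < 1 + τ * lam) (x z : E) :
    penalized f τ x (Jres f τ x) ≤ penalized f τ x z := by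
  have hex : ∃ y, ∀ z, penalized f τ x y ≤ penalized f τ x z :=
    (lambdaConvex_penalized hc x).exists_forall_le (add_one_div_pos_of_one_add_mul_pos hτ hadm)
      (properFn_penalized hp x) (lowerSemicontinuous_penalized hl x)
  have hJ : Jres f τ x = hex.choose := dif_pos hex
  rw [hJ]
  exact hex.choose_spec z

lemma apply_Jres_ne_top (hp : ProperFn f) (hc : LambdaConvex lam f) (hl : LowerSemicontinuous f)
    (hτ : 0 < τ) (hadm : 0 < 1 + τ * lam) (x : E) : f (Jres f τ x) ≠ ⊤ := by
  intro htop
  obtain ⟨y, hy⟩ := (properFn_penalized (τ := τ) hp x).1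
  have hle := penalized_Jres_le hp hc hl hτ hadm x y
  rw [penalized, htop, EReal.top_add_coe, top_le_iff] at hle
  exact hy hle

lemma yosida_mem_subdiff (hp : ProperFn f) (hc : LambdaConvex lam f) (hl : LowerSemicontinuous f)
    (hτ : 0 < τ) (hadm : 0 < 1 + τ * lam) (x : E) :
    yosida f τ x ∈ subdiff lam f (Jres f τ x) := by
  obtain ⟨a, ha⟩ := hp.exists_coe_eq (apply_Jres_ne_top hp hc hl hτ hadm x)
  refine (mem_subdiff_iff hp ha).2 fun z s hs => ?_
  have hgrowth := (lambdaConvex_penalized hc x).add_sq_le_of_forall_le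
    (penalized_Jres_le hp hc hl hτ hadm x) z
  rw [penalized, penalized, ha, hs, ← EReal.coe_add, ← EReal.coe_add, ← EReal.coe_add,
    EReal.coe_le_coe_iff] at hgrowth
  have hexpand : ‖z - x‖ ^ 2 = ‖z - Jres f τ x‖ ^ 2 - 2 * ⟪x - Jres f τ x, z - Jres f τ x⟫
      + ‖Jres f τ x - x‖ ^ 2 := by
    rw [← sub_sub_sub_cancel_right z x (Jres f τ x), norm_sub_sq_real, real_inner_comm,
      norm_sub_rev x]
  have hsplit : ‖z - x‖ ^ 2 / (2 * τ) = 1 / τ / 2 * ‖z - Jres f τ x‖ ^ 2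
      - ⟪yosida f τ x, z - Jres f τ x⟫ + ‖Jres f τ x - x‖ ^ 2 / (2 * τ) := by
    rw [hexpand, yosida, real_inner_smul_left]; field_simp
  linarith

lemma lipschitzWith_Jres (hp : ProperFn f) (hc : LambdaConvex lam f) (hl : LowerSemicontinuous f)
    (hτ : 0 < τ) (hadm : 0 < 1 + τ * lam) :
    LipschitzWith (1 + τ * lam)⁻¹.toNNReal (Jres f τ) := by
  refine LipschitzWith.of_dist_le_mul fun x y => ?_
  have h := mul_norm_sub_le_of_mem_subdiff hp hτ.le (yosida_mem_subdiff hp hc hl hτ hadm x)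
    (yosida_mem_subdiff hp hc hl hτ hadm y)
  rw [Jres_add_smul_yosida f hτ.ne', Jres_add_smul_yosida f hτ.ne'] at h
  rw [Real.coe_toNNReal _ (inv_nonneg.2 hadm.le), dist_eq_norm, dist_eq_norm]
  exact (le_inv_mul_iff₀ hadm).2 h

lemma lipschitzWith_yosida (hp : ProperFn f) (hc : LambdaConvex lam f)
    (hl : LowerSemicontinuous f) (hτ : 0 < τ) (hadm : 0 < 1 + τ * lam) :
    LipschitzWith (‖τ⁻¹‖₊ * (1 + (1 + τ * lam)⁻¹.toNNReal)) (yosida f τ) :=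
  (lipschitzWith_smul τ⁻¹).comp (LipschitzWith.id.sub (lipschitzWith_Jres hp hc hl hτ hadm))

lemma gradNorm_Jres_le (hp : ProperFn f) (hc : LambdaConvex lam f) (hl : LowerSemicontinuous f)
    (hτ : 0 < τ) (hadm : 0 < 1 + τ * lam) (x : E) :
    gradNorm lam f (Jres f τ x) ≤ ‖yosida f τ x‖ₑ :=
  gradNorm_le_enorm (yosida_mem_subdiff hp hc hl hτ hadm x)

lemma norm_yosida_le_of_mem_subdiff (hp : ProperFn f) (hc : LambdaConvex lam f)
    (hl : LowerSemicontinuous f) (hτ : 0 < τ) (hadm : 0 < 1 + τ * lam) {x p : E}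
    (hpx : p ∈ subdiff lam f x) : ‖yosida f τ x‖ ≤ (1 + τ * lam)⁻¹ * ‖p‖ := by
  have h := mul_norm_sub_le_of_mem_subdiff hp hτ.le hpx (yosida_mem_subdiff hp hc hl hτ hadm x)
  rw [Jres_add_smul_yosida f hτ.ne', add_sub_cancel_left, norm_smul, Real.norm_of_nonneg hτ.le] at h
  rw [yosida, norm_smul, norm_inv, Real.norm_of_nonneg hτ.le, inv_mul_le_iff₀ hτ, mul_left_comm]
  exact (le_inv_mul_iff₀ hadm).2 h

lemma enorm_yosida_le (hp : ProperFn f) (hc : LambdaConvex lam f) (hl : LowerSemicontinuous f)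
    (hτ : 0 < τ) (hadm : 0 < 1 + τ * lam) (x : E) :
    ‖yosida f τ x‖ₑ ≤ ENNReal.ofReal (1 + τ * lam)⁻¹ * gradNorm lam f x := by
  by_cases hne : (subdiff lam f x).Nonempty
  · rw [gradNorm, if_pos hne, ← ENNReal.ofReal_mul (inv_nonneg.2 hadm.le), ← ofReal_norm]
    exact ENNReal.ofReal_le_ofReal
      (norm_yosida_le_of_mem_subdiff hp hc hl hτ hadm (gradMin_mem_subdiff hp hne))
  · rw [gradNorm, if_neg hne,
      ENNReal.mul_top (ENNReal.ofReal_pos.2 (inv_pos.2 hadm)).ne']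
    exact le_top

end Resolvent

section WeakConvergence

/-- Weak convergence of the sequence `u` to `x`, tested against inner products. -/
def WeaklyTendsto {E : Type*} [NormedAddCommGroup E] [InnerProductSpace ℝ E] (u : ℕ → E) (x : E) :
    Prop :=
  ∀ p : E, Tendsto (fun n => ⟪u n, p⟫) atTop (𝓝 ⟪x, p⟫)

variable {E : Type*} [NormedAddCommGroup E] [InnerProductSpace ℝ E]

lemma weaklyTendsto_of_tendsto {u : ℕ → E} {x : E} (hu : Tendsto u atTop (𝓝 x)) :
    WeaklyTendsto u x :=
  fun _ => hu.inner tendsto_const_nhds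

lemma tendsto_extend_const {X : Type*} {l : Filter X} {φ : ℕ → ℕ} (hφ : StrictMono φ) {u : ℕ → X}
    (hu : Tendsto u atTop l) {x : X} (hx : pure x ≤ l) :
    Tendsto (Function.extend φ u fun _ => x) atTop l := by
  intro U hU
  obtain ⟨N, hN⟩ := eventually_atTop.1 (hu hU)
  refine mem_map.2 (mem_atTop_sets.2 ⟨φ N, fun n hn => ?_⟩)
  by_cases hk : ∃ k, φ k = n
  · obtain ⟨k, rfl⟩ := hk
    rw [mem_preimage, hφ.injective.extend_apply]
    exact hN k (hφ.le_iff_le.1 hn)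
  · rw [mem_preimage, Function.extend_apply' _ _ _ hk]
    exact mem_pure.1 (hx hU)

lemma WeaklyTendsto.extend_const {φ : ℕ → ℕ} (hφ : StrictMono φ) {u : ℕ → E} {x : E}
    (hu : WeaklyTendsto u x) : WeaklyTendsto (Function.extend φ u fun _ => x) x := by
  intro p
  have h := tendsto_extend_const hφ (hu p) (pure_le_nhds ⟪x, p⟫)
  exact h.congr fun n => (Function.apply_extend (fun w : E => ⟪w, p⟫) _ _ n).symm

lemma separableSpace_topologicalClosure_span {s : Set E} (hs : TopologicalSpace.IsSeparable s) :
    TopologicalSpace.SeparableSpace (Submodule.span ℝ s).topologicalClosure := by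
  have hsep : TopologicalSpace.IsSeparable
      ((Submodule.span ℝ s).topologicalClosure : Set E) := by
    rw [Submodule.topologicalClosure_coe]
    exact hs.span.closure
  exact hsep.separableSpace

lemma mem_topologicalClosure_span {s : Set E} {x : E} (hx : x ∈ s) :
    x ∈ (Submodule.span ℝ s).topologicalClosure :=
  Submodule.le_topologicalClosure _ (Submodule.subset_span hx)

variable [CompleteSpace E]

lemma exists_subseq_weaklyTendsto_of_separableSpace [TopologicalSpace.SeparableSpace E]
    {u : ℕ → E} {R : ℝ} (hu : ∀ n, ‖u n‖ ≤ R) :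
    ∃ (x : E) (φ : ℕ → ℕ), StrictMono φ ∧ WeaklyTendsto (u ∘ φ) x := by
  obtain ⟨v, -, φ, hφ, hv⟩ := WeakDual.isSeqCompact_closedBall (𝕜 := ℝ) (E := E) 0 R
    (x := fun n => StrongDual.toWeakDual (InnerProductSpace.toDual ℝ E (u n))) fun n => by
      rw [mem_preimage, mem_closedBall_zero_iff]
      exact ((InnerProductSpace.toDual ℝ E).norm_map (u n)).le.trans (hu n)
  refine ⟨(InnerProductSpace.toDual ℝ E).symm (WeakDual.toStrongDual v), φ, hφ, fun p => ?_⟩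
  rw [InnerProductSpace.toDual_symm_apply]
  exact ((WeakDual.eval_continuous p).tendsto v).comp hv

theorem exists_subseq_weaklyTendsto {u : ℕ → E} {R : ℝ} (hu : ∀ n, ‖u n‖ ≤ R) :
    ∃ (x : E) (φ : ℕ → ℕ), StrictMono φ ∧ WeaklyTendsto (u ∘ φ) x := by
  let K : Submodule ℝ E := (Submodule.span ℝ (range u)).topologicalClosure
  have : TopologicalSpace.SeparableSpace K :=
    separableSpace_topologicalClosure_span (countable_range u).isSeparable
  let v : ℕ → K := fun n => ⟨u n, mem_topologicalClosure_span (mem_range_self n)⟩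
  obtain ⟨x, φ, hφ, hx⟩ := exists_subseq_weaklyTendsto_of_separableSpace (u := v) hu
  refine ⟨x, φ, hφ, fun p => ?_⟩
  have hproj : ∀ w : K, ⟪(w : E), p⟫ = ⟪w, K.orthogonalProjectionOnto p⟫ := fun w =>
    (Submodule.inner_orthogonalProjectionOnto_eq_of_mem_left w p).symm
  rw [hproj]
  exact (hx (K.orthogonalProjectionOnto p)).congr fun n => (hproj (v (φ n))).symm

end WeakConvergence

section Mosco

variable {E : Type*} [NormedAddCommGroup E] [InnerProductSpace ℝ E]
  {fh Fh : ℕ → E → EReal} {f F : E → EReal} {μ : ℝ}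

lemma Mosco.comp_strictMono (hM : Mosco fh f) {φ : ℕ → ℕ} (hφ : StrictMono φ) :
    Mosco (fh ∘ φ) f := by
  refine ⟨fun x => ?_, fun u x hu => ?_⟩
  · obtain ⟨v, hv, hlimsup⟩ := hM.1 x
    exact ⟨v ∘ φ, hv.comp hφ.tendsto_atTop,
      (limsup_le_limsup_of_le (u := fun h => fh h (v h)) hφ.tendsto_atTop).trans hlimsup⟩
  · let U : ℕ → E := Function.extend φ u fun _ => x
    have hU : (fun h => fh h (U h)) ∘ φ = fun k => (fh ∘ φ) k (u k) :=
      funext fun k => congrArg (fh (φ k)) (hφ.injective.extend_apply u _ k)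
    calc f x ≤ liminf (fun h => fh h (U h)) atTop := hM.2 U x (WeaklyTendsto.extend_const hφ hu)
      _ ≤ liminf (fun h => fh h (U h)) (map φ atTop) := liminf_le_liminf_of_le hφ.tendsto_atTop
      _ = liminf (fun k => (fh ∘ φ) k (u k)) atTop := by rw [← hU]; rfl

lemma norm_sub_sq_ge_two_mul_inner_sub_sq (u x y : E) :
    2 * ⟪u - x, y - x⟫ - ‖y - x‖ ^ 2 ≤ ‖u - x‖ ^ 2 := by
  have h := norm_sub_sq_real (u - x) (y - x)
  linarith [sq_nonneg ‖u - x - (y - x)‖]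

theorem mosco_penalized (hM : Mosco fh f) {τ : ℝ} (hτ : 0 < τ) (x : E) :
    Mosco (fun h => penalized (fh h) τ x) (penalized f τ x) := by
  refine ⟨fun y => ?_, fun u y hu => ?_⟩
  · obtain ⟨v, hv, hlimsup⟩ := hM.1 y
    have hquad : limsup (fun h => ((‖v h - x‖ ^ 2 / (2 * τ) : ℝ) : EReal)) atTop
        = ((‖y - x‖ ^ 2 / (2 * τ) : ℝ) : EReal) :=
      (EReal.tendsto_coe.2 (((hv.sub_const x).norm.pow 2).div_const (2 * τ))).limsup_eq
    refine ⟨v, hv, (EReal.limsup_add_le (Or.inr ?_) (Or.inr ?_)).trans ?_⟩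
    · rw [hquad]; exact EReal.coe_ne_top _
    · rw [hquad]; exact EReal.coe_ne_bot _
    · exact add_le_add hlimsup hquad.le
  · have hminorant : Tendsto (fun h => (2 * ⟪u h - x, y - x⟫ - ‖y - x‖ ^ 2) / (2 * τ)) atTop
        (𝓝 ((2 * ⟪y - x, y - x⟫ - ‖y - x‖ ^ 2) / (2 * τ))) := by
      simp only [inner_sub_left _ x]
      exact ((((hu (y - x)).sub_const _).const_mul 2).sub_const _).div_const _
    have hlimit : (2 * ⟪y - x, y - x⟫ - ‖y - x‖ ^ 2) / (2 * τ) = ‖y - x‖ ^ 2 / (2 * τ) := by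
      rw [real_inner_self_eq_norm_sq]; ring
    rw [hlimit] at hminorant
    calc penalized f τ x y
        ≤ liminf (fun h => fh h (u h)) atTop
          + liminf (fun h => (((2 * ⟪u h - x, y - x⟫ - ‖y - x‖ ^ 2) / (2 * τ) : ℝ) : EReal))
            atTop := add_le_add (hM.2 u y hu) (EReal.tendsto_coe.2 hminorant).liminf_eq.ge
      _ ≤ liminf (fun h => fh h (u h)
          + (((2 * ⟪u h - x, y - x⟫ - ‖y - x‖ ^ 2) / (2 * τ) : ℝ) : EReal)) atTop :=
        EReal.le_liminf_add
      _ ≤ liminf (fun h => penalized (fh h) τ x (u h)) atTop := by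
        refine liminf_le_liminf (Eventually.of_forall fun h => add_le_add_right ?_ _)
        exact EReal.coe_le_coe_iff.2 (by gcongr; exact norm_sub_sq_ge_two_mul_inner_sub_sq _ _ _)

lemma Mosco.eventually_lt (hM : Mosco Fh F) {a : EReal} {y : E} (ha : a < F y) :
    ∀ᶠ q : ℕ × E in atTop ×ˢ 𝓝 y, a < Fh q.1 q.2 := by
  by_contra hnot
  obtain ⟨q, hq, hqa⟩ := exists_seq_forall_of_frequently (not_eventually.1 hnot)
  obtain ⟨φ, hφ, hqφ⟩ := strictMono_subseq_of_tendsto_atTop (tendsto_fst.comp hq)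
  have hsnd : Tendsto (fun k => (q (φ k)).2) atTop (𝓝 y) :=
    (tendsto_snd.comp hq).comp hφ.tendsto_atTop
  have hliminf := (hM.comp_strictMono hqφ).2 _ y (weaklyTendsto_of_tendsto hsnd)
  have hle : ∀ k, Fh (q (φ k)).1 (q (φ k)).2 ≤ a := fun k => not_lt.1 (hqa (φ k))
  exact ha.not_ge (hliminf.trans
    (liminf_le_of_frequently_le' (Frequently.of_forall hle)))

lemma Mosco.exists_eventually_forall_le (hM : Mosco Fh F) (hc : ∀ h, LambdaConvex μ (Fh h))
    (hμ : 0 < μ) {y : E} {a : ℝ} (ha : F y = a) :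
    ∃ c : ℝ, ∀ᶠ h in atTop, ∀ w, (c : EReal) ≤ Fh h w := by
  have hlt : ((a - 1 : ℝ) : EReal) < F y := by
    rw [ha]; exact EReal.coe_lt_coe_iff.2 (sub_one_lt a)
  obtain ⟨_, hpa, _, hpb, hlower⟩ := eventually_prod_iff.1 (hM.eventually_lt hlt)
  obtain ⟨r, hr, hball⟩ := Metric.eventually_nhds_iff_ball.1 hpb
  obtain ⟨v, hv, hlimsup⟩ := hM.1 y
  have hupper : ∀ᶠ h in atTop, Fh h (v h) < ((a + 1 : ℝ) : EReal) :=
    eventually_lt_of_limsup_lt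
      (hlimsup.trans_lt (by rw [ha]; exact EReal.coe_lt_coe_iff.2 (lt_add_one a)))
  refine ⟨a - 1 - 4 * (a + 1 - (a - 1)) ^ 2 / (μ * (r / 2) ^ 2), ?_⟩
  filter_upwards [hpa, hupper, hv.eventually (Metric.ball_mem_nhds y (half_pos hr))]
    with h hh hup hvh
  refine (hc h).le_of_le_on_ball hμ (half_pos hr) hup.le fun w hw => (hlower hh (hball w ?_)).le
  exact Metric.ball_subset_ball' (by linarith [Metric.mem_ball.1 hvh]) hw

lemma mul_norm_sub_sq_le_of_forall_le (hF : LambdaConvex μ F) {y z : E} {a b : ℝ}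
    (hy : ∀ w, F y ≤ F w) (ha : a ≤ F y) (hb : F z ≤ b) : μ / 2 * ‖z - y‖ ^ 2 ≤ b - a := by
  have h := (add_le_add_left ha _).trans ((hF.add_sq_le_of_forall_le hy z).trans hb)
  rw [← EReal.coe_add, EReal.coe_le_coe_iff] at h
  linarith

lemma Mosco.exists_norm_minimizer_le (hM : Mosco Fh F) (hc : ∀ h, LambdaConvex μ (Fh h))
    (hμ : 0 < μ) {y : E} {a : ℝ} (ha : F y = a) {z : ℕ → E} (hz : ∀ h w, Fh h (z h) ≤ Fh h w) :
    ∃ R, ∀ h, ‖z h‖ ≤ R := by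
  obtain ⟨c, hlower⟩ := hM.exists_eventually_forall_le hc hμ ha
  obtain ⟨v, hv, hlimsup⟩ := hM.1 y
  have hupper : ∀ᶠ h in atTop, Fh h (v h) < ((a + 1 : ℝ) : EReal) :=
    eventually_lt_of_limsup_lt
      (hlimsup.trans_lt (by rw [ha]; exact EReal.coe_lt_coe_iff.2 (lt_add_one a)))
  have hbdd : ∀ᶠ h in atTop, ‖z h‖ ≤ ‖y‖ + 1 + √(2 / μ * (a + 1 - c)) := by
    filter_upwards [hlower, hupper, hv.norm.eventually (Iio_mem_nhds (lt_add_one ‖y‖))]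
      with h hlow hup hvh
    have hsq : ‖v h - z h‖ ^ 2 ≤ 2 / μ * (a + 1 - c) := by
      have := mul_norm_sub_sq_le_of_forall_le (hc h) (hz h) (hlow _) hup.le
      rw [div_mul_eq_mul_div, le_div_iff₀ hμ]
      linarith
    calc ‖z h‖ = ‖v h - (v h - z h)‖ := by rw [sub_sub_cancel]
      _ ≤ ‖v h‖ + ‖v h - z h‖ := norm_sub_le _ _
      _ ≤ ‖y‖ + 1 + √(2 / μ * (a + 1 - c)) := add_le_add hvh.le (Real.le_sqrt_of_sq_le hsq)
  obtain ⟨R, hR⟩ := IsBoundedUnder.bddAbove_range ⟨_, eventually_map.2 hbdd⟩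
  exact ⟨R, fun h => hR (mem_range_self h)⟩

lemma tendsto_sub_minimizer (hc : ∀ h, LambdaConvex μ (Fh h)) (hμ : 0 < μ) {a : ℝ} {v z : ℕ → E}
    (hz : ∀ h w, Fh h (z h) ≤ Fh h w) (hinf : a ≤ liminf (fun h => Fh h (z h)) atTop)
    (hsup : limsup (fun h => Fh h (v h)) atTop ≤ a) :
    Tendsto (fun h => v h - z h) atTop (𝓝 0) := by
  refine Metric.tendsto_nhds.2 fun ε hε => ?_
  obtain ⟨δ, hδ⟩ : ∃ δ, δ = μ / 4 * ε ^ 2 / 2 := ⟨_, rfl⟩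
  have hδ0 : 0 < δ := by rw [hδ]; positivity
  have hlower : ∀ᶠ h in atTop, ((a - δ : ℝ) : EReal) < Fh h (z h) := eventually_lt_of_lt_liminf
    (lt_of_lt_of_le (EReal.coe_lt_coe_iff.2 (sub_lt_self a hδ0)) hinf)
  have hupper : ∀ᶠ h in atTop, Fh h (v h) < ((a + δ : ℝ) : EReal) := eventually_lt_of_limsup_lt
    (hsup.trans_lt (EReal.coe_lt_coe_iff.2 (lt_add_of_pos_right a hδ0)))
  filter_upwards [hlower, hupper] with h hlow hup
  have hsq := mul_norm_sub_sq_le_of_forall_le (hc h) (hz h) hlow.le hup.le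
  rw [dist_zero_right]
  refine lt_of_pow_lt_pow_left₀ 2 hε.le (lt_of_mul_lt_mul_left ?_ (half_pos hμ).le)
  calc μ / 2 * ‖v h - z h‖ ^ 2 ≤ μ / 4 * ε ^ 2 := by linarith
    _ < μ / 2 * ε ^ 2 := by gcongr; norm_num

theorem Mosco.tendsto_minimizer [CompleteSpace E] (hM : Mosco Fh F)
    (hc : ∀ h, LambdaConvex μ (Fh h)) (hμ : 0 < μ) {y : E} {a : ℝ} (ha : F y = a)
    (hy : ∀ w, F y ≤ F w) {z : ℕ → E} (hz : ∀ h w, Fh h (z h) ≤ Fh h w) :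
    Tendsto z atTop (𝓝 y) := by
  obtain ⟨R, hR⟩ := hM.exists_norm_minimizer_le hc hμ ha hz
  obtain ⟨v, hv, hlimsup⟩ := hM.1 y
  refine tendsto_of_subseq_tendsto fun ns hns => ?_
  obtain ⟨φ, -, hφ⟩ := strictMono_subseq_of_tendsto_atTop hns
  obtain ⟨x, ψ, hψ, hx⟩ := exists_subseq_weaklyTendsto fun k => hR (ns (φ k))
  have hθ : StrictMono ((ns ∘ φ) ∘ ψ) := hφ.comp hψ
  refine ⟨φ ∘ ψ, ?_⟩
  have hsub : Tendsto (fun k => v (ns (φ (ψ k))) - z (ns (φ (ψ k)))) atTop (𝓝 0) :=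
    tendsto_sub_minimizer (fun k => hc (ns (φ (ψ k)))) hμ (fun k => hz _)
      (ha ▸ (hy x).trans ((hM.comp_strictMono hθ).2 _ x hx))
      (ha ▸ (limsup_le_limsup_of_le (u := fun h => Fh h (v h)) hθ.tendsto_atTop).trans hlimsup)
  simpa only [sub_sub_cancel, sub_zero, Function.comp_apply] using
    (hv.comp hθ.tendsto_atTop).sub hsub

theorem Mosco.tendsto_Jres [CompleteSpace E] (hM : Mosco fh f) {lam τ : ℝ}
    (hfhp : ∀ h, ProperFn (fh h)) (hfhc : ∀ h, LambdaConvex lam (fh h))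
    (hfhl : ∀ h, LowerSemicontinuous (fh h)) (hp : ProperFn f) (hc : LambdaConvex lam f)
    (hl : LowerSemicontinuous f) (hτ : 0 < τ) (hadm : 0 < 1 + τ * lam) (x : E) :
    Tendsto (fun h => Jres (fh h) τ x) atTop (𝓝 (Jres f τ x)) := by
  have hne : penalized f τ x (Jres f τ x) ≠ ⊤ :=
    EReal.add_ne_top (apply_Jres_ne_top hp hc hl hτ hadm x) (EReal.coe_ne_top _)
  obtain ⟨a, ha⟩ := (properFn_penalized hp x).exists_coe_eq hne
  exact (mosco_penalized hM hτ x).tendsto_minimizer (fun h => lambdaConvex_penalized (hfhc h) x)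
    (add_one_div_pos_of_one_add_mul_pos hτ hadm) ha (penalized_Jres_le hp hc hl hτ hadm x)
    fun h => penalized_Jres_le (hfhp h) (hfhc h) (hfhl h) hτ hadm x

theorem Mosco.tendsto_yosida [CompleteSpace E] (hM : Mosco fh f) {lam τ : ℝ}
    (hfhp : ∀ h, ProperFn (fh h)) (hfhc : ∀ h, LambdaConvex lam (fh h))
    (hfhl : ∀ h, LowerSemicontinuous (fh h)) (hp : ProperFn f) (hc : LambdaConvex lam f)
    (hl : LowerSemicontinuous f) (hτ : 0 < τ) (hadm : 0 < 1 + τ * lam) (x : E) :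
    Tendsto (fun h => yosida (fh h) τ x) atTop (𝓝 (yosida f τ x)) :=
  ((hM.tendsto_Jres hfhp hfhc hfhl hp hc hl hτ hadm x).const_sub x).const_smul τ⁻¹

end Mosco

section AbsolutelyContinuous

/-- `g` is an integrable density of the curve `γ` on `[a, b]`, so that `IsACCurve a b γ` is the
existence of a density. Naming the density lets one compare the densities of different curves. -/
def IsACDensity {E : Type*} [NormedAddCommGroup E] [NormedSpace ℝ E] (a b : ℝ) (γ g : ℝ → E) :
    Prop :=
  IntegrableOn g (Icc a b) ∧ ∀ t ∈ Icc a b, γ t = γ a + ∫ s in a..t, g s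

variable {a b : ℝ}

lemma ae_restrict_Icc_mem_nhds (a b : ℝ) :
    ∀ᵐ t ∂volume.restrict (Icc a b), Icc a b ∈ 𝓝 t := by
  rw [← restrict_Ioo_eq_restrict_Icc]
  filter_upwards [ae_restrict_mem measurableSet_Ioo] with t ht
  exact Icc_mem_nhds ht.1 ht.2

lemma norm_le_mul_norm_of_hasDerivAt {E F : Type*} [NormedAddCommGroup E] [NormedSpace ℝ E]
    [NormedAddCommGroup F] [NormedSpace ℝ F] {γ : ℝ → E} {η : ℝ → F} {g : E} {k : F} {C t : ℝ}
    (hγ : HasDerivAt γ g t) (hη : HasDerivAt η k t)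
    (hle : ∀ᶠ s in 𝓝 t, ‖η s - η t‖ ≤ C * ‖γ s - γ t‖) : ‖k‖ ≤ C * ‖g‖ := by
  refine le_of_tendsto_of_tendsto (hasDerivAt_iff_tendsto_slope.1 hη).norm
    ((hasDerivAt_iff_tendsto_slope.1 hγ).norm.const_mul C) ?_
  filter_upwards [nhdsWithin_le_nhds hle] with s hs
  simp only [slope_def_module, norm_smul]
  rw [mul_left_comm]
  exact mul_le_mul_of_nonneg_left hs (norm_nonneg _)

lemma absolutelyContinuousOnInterval_of_dist_le {X Y : Type*} [PseudoMetricSpace X]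
    [PseudoMetricSpace Y] {φ : ℝ → X} {η : ℝ → Y} (hφ : AbsolutelyContinuousOnInterval φ a b)
    (hle : ∀ s ∈ uIcc a b, ∀ t ∈ uIcc a b, dist (η s) (η t) ≤ dist (φ s) (φ t)) :
    AbsolutelyContinuousOnInterval η a b := by
  rw [absolutelyContinuousOnInterval_iff] at hφ ⊢
  intro ε hε
  obtain ⟨δ, hδ, hφδ⟩ := hφ ε hε
  refine ⟨δ, hδ, fun I hI hlen => (Finset.sum_le_sum fun i hi => ?_).trans_lt (hφδ I hI hlen)⟩
  exact hle _ (hI.1 i hi).1 _ (hI.1 i hi).2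

namespace IsACDensity

variable {E : Type*} [NormedAddCommGroup E] [NormedSpace ℝ E] {γ g k : ℝ → E}

lemma intervalIntegrable (h : IsACDensity a b γ g) {t : ℝ} (ht : t ∈ Icc a b) :
    IntervalIntegrable g volume a t :=
  (intervalIntegrable_iff_integrableOn_Ioc_of_le ht.1).2
    (h.1.mono_set (Ioc_subset_Icc_self.trans (Icc_subset_Icc_right ht.2)))

lemma norm_sub_le (h : IsACDensity a b γ g) {s t : ℝ} (hs : s ∈ Icc a b) (ht : t ∈ Icc a b) :
    ‖γ s - γ t‖ ≤ |(∫ r in a..s, ‖g r‖) - ∫ r in a..t, ‖g r‖| := by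
  rw [h.2 s hs, h.2 t ht, add_sub_add_left_eq_sub,
    intervalIntegral.integral_interval_sub_left (h.intervalIntegrable hs) (h.intervalIntegrable ht),
    intervalIntegral.integral_interval_sub_left (h.intervalIntegrable hs).norm
      (h.intervalIntegrable ht).norm]
  exact intervalIntegral.norm_integral_le_abs_integral_norm

lemma continuousOn (h : IsACDensity a b γ g) (hab : a ≤ b) : ContinuousOn γ (Icc a b) := by
  have hprim := intervalIntegral.continuousOn_primitive_interval ((uIcc_of_le hab).symm ▸ h.1)
  rw [uIcc_of_le hab] at hprim
  exact (continuousOn_const.add hprim).congr h.2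

lemma clm_comp {F : Type*} [NormedAddCommGroup F] [NormedSpace ℝ F] [CompleteSpace E]
    [CompleteSpace F] (h : IsACDensity a b γ g) (L : E →L[ℝ] F) :
    IsACDensity a b (fun t => L (γ t)) fun t => L (g t) := by
  refine ⟨L.integrable_comp h.1, fun t ht => ?_⟩
  rw [L.intervalIntegral_comp_comm (h.intervalIntegrable ht), ← map_add, ← h.2 t ht]

variable [CompleteSpace E]

lemma ae_hasDerivAt (h : IsACDensity a b γ g) (hab : a ≤ b) :
    ∀ᵐ t ∂volume.restrict (Icc a b), HasDerivAt γ (g t) t := by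
  have hprim := (h.intervalIntegrable (right_mem_Icc.2 hab)).ae_hasDerivAt_integral
  rw [uIcc_of_le hab] at hprim
  filter_upwards [ae_restrict_mem measurableSet_Icc, ae_restrict_of_ae hprim,
    ae_restrict_Icc_mem_nhds a b] with t ht hderiv hnhds
  refine ((hderiv ht a (left_mem_Icc.2 hab)).const_add (γ a)).congr_of_eventuallyEq ?_
  filter_upwards [hnhds] with s hs using h.2 s hs

lemma ae_eq (hg : IsACDensity a b γ g) (hk : IsACDensity a b γ k) (hab : a ≤ b) :
    g =ᵐ[volume.restrict (Icc a b)] k := by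
  filter_upwards [hg.ae_hasDerivAt hab, hk.ae_hasDerivAt hab] with t hgt hkt
  exact hgt.unique hkt

lemma ae_enorm_le_of_lipschitzWith {F : Type*} [NormedAddCommGroup F] [NormedSpace ℝ F]
    [CompleteSpace F] {T : E → F} {K : NNReal} (hT : LipschitzWith K T) {k : ℝ → F}
    (hg : IsACDensity a b γ g) (hk : IsACDensity a b (T ∘ γ) k) (hab : a ≤ b) :
    ∀ᵐ t ∂volume.restrict (Icc a b), ‖k t‖ₑ ≤ K * ‖g t‖ₑ := by
  filter_upwards [hg.ae_hasDerivAt hab, hk.ae_hasDerivAt hab] with t hgt hkt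
  have hle : ‖k t‖ ≤ K * ‖g t‖ :=
    norm_le_mul_norm_of_hasDerivAt hgt hkt (Eventually.of_forall fun s => hT.norm_sub_le _ _)
  simp only [enorm_eq_nnnorm, ← ENNReal.coe_mul, ENNReal.coe_le_coe]
  exact hle

end IsACDensity

end AbsolutelyContinuous

section RadonNikodym

variable {E : Type*} [NormedAddCommGroup E] [InnerProductSpace ℝ E] {ι : Type*} {a b : ℝ}

lemma countable_of_orthonormal [TopologicalSpace.SeparableSpace E] {v : ι → E}
    (hv : Orthonormal ℝ v) : Countable ι := by
  have hdist : ∀ i j, i ≠ j → 1 ≤ dist (v i) (v j) := by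
    intro i j hij
    have hsq : ‖v i - v j‖ ^ 2 = 2 := by
      rw [norm_sub_sq_real, hv.1 i, hv.1 j, hv.2 hij]
      norm_num
    rw [dist_eq_norm]
    nlinarith [norm_nonneg (v i - v j)]
  have hdisj : (univ : Set ι).PairwiseDisjoint fun i => Metric.ball (v i) (1 / 2) :=
    fun i _ j _ hij => Metric.ball_disjoint_ball (by linarith [hdist i j hij])
  exact countable_univ_iff.1 (hdisj.countable_of_isOpen (fun _ _ => Metric.isOpen_ball)
    fun i _ => Metric.nonempty_ball.2 one_half_pos)

lemma norm_sq_sum_smul_of_orthonormal {v : ι → E} (hv : Orthonormal ℝ v) (S : Finset ι)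
    (c : ι → ℝ) : ‖∑ i ∈ S, c i • v i‖ ^ 2 = ∑ i ∈ S, c i ^ 2 := by
  rw [← real_inner_self_eq_norm_sq, hv.inner_sum]
  simp only [conj_trivial, sq]

lemma norm_sum_inner_smul_le {v : ι → E} (hv : Orthonormal ℝ v) (S : Finset ι) (x : E) :
    ‖∑ i ∈ S, ⟪v i, x⟫ • v i‖ ≤ ‖x‖ := by
  refine le_of_sq_le_sq ?_ (norm_nonneg x)
  rw [norm_sq_sum_smul_of_orthonormal hv]
  simpa only [Real.norm_eq_abs, sq_abs] using hv.sum_inner_products_le x (s := S)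

lemma exists_inner_hilbertBasis_eq (v : HilbertBasis ι ℝ E) {c : ι → ℝ} {M : ℝ}
    (hc : ∀ S : Finset ι, ∑ i ∈ S, c i ^ 2 ≤ M ^ 2) :
    ∃ x : E, ‖x‖ ≤ |M| ∧ ∀ i, ⟪v i, x⟫ = c i := by
  have hmem : Memℓp c 2 := memℓp_gen' (C := M ^ 2) fun S => by simpa using hc S
  let c' : lp (fun _ : ι => ℝ) 2 := ⟨c, hmem⟩
  refine ⟨v.repr.symm c', ?_, fun i => ?_⟩
  · rw [LinearIsometryEquiv.norm_map]
    exact lp.norm_le_of_forall_sum_le (by norm_num) (abs_nonneg M) fun S => by simpa using hc S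
  · rw [← v.repr_apply_apply, LinearIsometryEquiv.apply_symm_apply]

lemma aestronglyMeasurable_of_inner_hilbertBasis [Countable ι] (v : HilbertBasis ι ℝ E)
    {α : Type*} [MeasurableSpace α] {ν : Measure α} {G : α → E}
    (hG : ∀ i, AEStronglyMeasurable (fun x => ⟪v i, G x⟫) ν) : AEStronglyMeasurable G ν := by
  refine aestronglyMeasurable_of_tendsto_ae (atTop : Filter (Finset ι))
    (f := fun S x => ∑ i ∈ S, ⟪v i, G x⟫ • v i)
    (fun S => Finset.aestronglyMeasurable_fun_sum _ fun i _ => (hG i).smul_const _)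
    (Eventually.of_forall fun x => ?_)
  have hsum := v.hasSum_repr (G x)
  simp only [v.repr_apply_apply] at hsum
  exact hsum

lemma sum_sq_deriv_inner_le {v : ι → E} (hv : Orthonormal ℝ v) {η : ℝ → E} {φ : ℝ → ℝ} {t : ℝ}
    (hφ : DifferentiableAt ℝ φ t) (hη : ∀ i, DifferentiableAt ℝ (fun s => ⟪v i, η s⟫) t)
    (hle : ∀ᶠ s in 𝓝 t, dist (η s) (η t) ≤ dist (φ s) (φ t)) (S : Finset ι) :
    ∑ i ∈ S, deriv (fun s => ⟪v i, η s⟫) t ^ 2 ≤ deriv φ t ^ 2 := by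
  have hproj : HasDerivAt (fun s => ∑ i ∈ S, ⟪v i, η s⟫ • v i)
      (∑ i ∈ S, deriv (fun s => ⟪v i, η s⟫) t • v i) t :=
    HasDerivAt.fun_sum fun i _ => (hη i).hasDerivAt.smul_const (v i)
  have hnorm : ‖∑ i ∈ S, deriv (fun s => ⟪v i, η s⟫) t • v i‖ ≤ 1 * ‖deriv φ t‖ := by
    refine norm_le_mul_norm_of_hasDerivAt hφ.hasDerivAt hproj ?_
    filter_upwards [hle] with s hs
    rw [one_mul, ← Finset.sum_sub_distrib, ← dist_eq_norm (φ s)]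
    simp only [← sub_smul, ← inner_sub_right]
    exact (norm_sum_inner_smul_le hv S _).trans (dist_eq_norm (η s) (η t) ▸ hs)
  rw [← norm_sq_sum_smul_of_orthonormal hv, ← sq_abs (deriv φ t)]
  exact pow_le_pow_left₀ (norm_nonneg _) (hnorm.trans_eq (one_mul _)) 2

lemma absolutelyContinuousOnInterval_inner {v : ι → E} (hv : Orthonormal ℝ v) {φ : ℝ → ℝ}
    (hφ : AbsolutelyContinuousOnInterval φ a b) {η : ℝ → E}
    (hle : ∀ s ∈ uIcc a b, ∀ t ∈ uIcc a b, dist (η s) (η t) ≤ dist (φ s) (φ t)) (i : ι) :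
    AbsolutelyContinuousOnInterval (fun t => ⟪v i, η t⟫) a b := by
  refine absolutelyContinuousOnInterval_of_dist_le hφ fun s hs t ht => ?_
  refine le_trans ?_ (hle s hs t ht)
  rw [Real.dist_eq, ← inner_sub_right, dist_eq_norm]
  exact (abs_real_inner_le_norm _ _).trans_eq (by rw [hv.1 i, one_mul])

lemma exists_integrableOn_inner_eq_deriv [Countable ι] (v : HilbertBasis ι ℝ E) (hab : a ≤ b)
    {φ : ℝ → ℝ} (hφ : AbsolutelyContinuousOnInterval φ a b) {η : ℝ → E}
    (hle : ∀ s ∈ uIcc a b, ∀ t ∈ uIcc a b, dist (η s) (η t) ≤ dist (φ s) (φ t)) :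
    ∃ G : ℝ → E, IntegrableOn G (Icc a b) ∧
      ∀ᵐ t ∂volume.restrict (Icc a b), ∀ i, ⟪v i, G t⟫ = deriv (fun s => ⟪v i, η s⟫) t := by
  have hφint : IntegrableOn (deriv φ) (Icc a b) :=
    (intervalIntegrable_iff_integrableOn_Icc_of_le hab).1 hφ.intervalIntegrable_deriv
  have hdiff : ∀ᵐ t, ∀ i, t ∈ uIcc a b → DifferentiableAt ℝ (fun s => ⟪v i, η s⟫) t :=
    ae_all_iff.2 fun i =>
      (absolutelyContinuousOnInterval_inner v.orthonormal hφ hle i).ae_differentiableAt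
  rw [uIcc_of_le hab] at hdiff hle
  have hbessel : ∀ᵐ t ∂volume.restrict (Icc a b), ∀ S : Finset ι,
      ∑ i ∈ S, deriv (fun s => ⟪v i, η s⟫) t ^ 2 ≤ deriv φ t ^ 2 := by
    filter_upwards [ae_restrict_mem measurableSet_Icc, ae_restrict_of_ae hdiff,
      ae_restrict_of_ae hφ.ae_differentiableAt, ae_restrict_Icc_mem_nhds a b]
      with t ht hηt hφt hnhds
    refine sum_sq_deriv_inner_le v.orthonormal (hφt (uIcc_of_le hab ▸ ht)) (fun i => hηt i ht) ?_
    filter_upwards [hnhds] with s hs using hle s hs t ht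
  choose! G hnorm hinner using fun t ht =>
    exists_inner_hilbertBasis_eq v (M := deriv φ t) (c := fun i => deriv (fun s => ⟪v i, η s⟫) t) ht
  refine ⟨G, hφint.norm.mono' (aestronglyMeasurable_of_inner_hilbertBasis v fun i => ?_)
    (hbessel.mono hnorm), hbessel.mono hinner⟩
  exact (measurable_deriv _).aestronglyMeasurable.congr
    (hbessel.mono fun t ht => (hinner t ht i).symm)

lemma isACCurve_of_dist_le_of_separableSpace [CompleteSpace E] [TopologicalSpace.SeparableSpace E]
    (hab : a ≤ b) {φ : ℝ → ℝ} (hφ : AbsolutelyContinuousOnInterval φ a b) {η : ℝ → E}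
    (hle : ∀ s ∈ uIcc a b, ∀ t ∈ uIcc a b, dist (η s) (η t) ≤ dist (φ s) (φ t)) :
    IsACCurve a b η := by
  obtain ⟨w, v, -⟩ := exists_hilbertBasis ℝ E
  have : Countable w := countable_of_orthonormal v.orthonormal
  obtain ⟨G, hGint, hG⟩ := exists_integrableOn_inner_eq_deriv v hab hφ hle
  refine ⟨G, hGint, fun t ht => eq_add_of_sub_eq' (v.repr.injective (lp.ext (funext fun i => ?_)))⟩
  have hsub : uIoc a t ⊆ Icc a b := by
    rw [uIoc_of_le ht.1]
    exact Ioc_subset_Icc_self.trans (Icc_subset_Icc_right ht.2)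
  have hGII : IntervalIntegrable G volume a t := intervalIntegrable_iff.2 (hGint.mono_set hsub)
  have hAC : AbsolutelyContinuousOnInterval (fun s => ⟪v i, η s⟫) a t :=
    (absolutelyContinuousOnInterval_inner v.orthonormal hφ hle i).mono
      (uIcc_subset_uIcc_left (uIcc_of_le hab ▸ ht))
  symm
  calc v.repr (∫ s in a..t, G s) i = ∫ s in a..t, ⟪v i, G s⟫ := by
        rw [v.repr_apply_apply]
        exact ((innerSL ℝ (v i)).intervalIntegral_comp_comm hGII).symm
    _ = ∫ s in a..t, deriv (fun s => ⟪v i, η s⟫) s := by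
        refine intervalIntegral.integral_congr_ae ?_
        filter_upwards [(ae_restrict_iff' measurableSet_Icc).1 hG] with s hs hst
        exact hs (hsub hst) i
    _ = v.repr (η t - η a) i := by
        rw [hAC.integral_deriv_eq_sub, v.repr_apply_apply, inner_sub_right]

theorem isACCurve_of_dist_le [CompleteSpace E] (hab : a ≤ b) {φ : ℝ → ℝ}
    (hφ : AbsolutelyContinuousOnInterval φ a b) {η : ℝ → E}
    (hle : ∀ s ∈ uIcc a b, ∀ t ∈ uIcc a b, dist (η s) (η t) ≤ dist (φ s) (φ t)) :
    IsACCurve a b η := by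
  have hηc : ContinuousOn η (uIcc a b) :=
    (absolutelyContinuousOnInterval_of_dist_le hφ hle).continuousOn
  set K : Submodule ℝ E := (Submodule.span ℝ (η '' uIcc a b)).topologicalClosure
  have : TopologicalSpace.SeparableSpace K := separableSpace_topologicalClosure_span
    (isCompact_uIcc.image_of_continuousOn hηc).isSeparable
  have : CompleteSpace K := (Submodule.isClosed_topologicalClosure _).completeSpace_coe
  have hproj : ∀ t ∈ Icc a b, (K.orthogonalProjectionOnto (η t) : E) = η t := fun t ht =>
    Submodule.starProjection_eq_self_iff.2
      (mem_topologicalClosure_span (mem_image_of_mem η (Icc_subset_uIcc ht)))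
  have hAC : IsACCurve a b fun t => K.orthogonalProjectionOnto (η t) := by
    refine isACCurve_of_dist_le_of_separableSpace hab hφ fun s hs t ht => ?_
    refine le_trans ?_ (hle s hs t ht)
    rw [dist_eq_norm, ← map_sub, dist_eq_norm]
    exact K.norm_orthogonalProjectionOnto_apply_le _
  obtain ⟨g, hg⟩ := hAC
  have hcoe := IsACDensity.clm_comp hg K.subtypeL
  refine ⟨_, hcoe.1, fun t ht => ?_⟩
  have hint := hcoe.2 t ht
  simp only [Submodule.subtypeL_apply] at hint ⊢
  rwa [hproj t ht, hproj a (left_mem_Icc.2 hab)] at hint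

lemma isACCurve_comp_of_lipschitzWith [CompleteSpace E] {F : Type*} [NormedAddCommGroup F]
    [NormedSpace ℝ F] {T : F → E} {K : NNReal} (hT : LipschitzWith K T) {γ g : ℝ → F}
    (hg : IsACDensity a b γ g) (hab : a ≤ b) : IsACCurve a b (T ∘ γ) := by
  have hφ : AbsolutelyContinuousOnInterval (fun t => K * ∫ s in a..t, ‖g s‖) a b :=
    ((hg.intervalIntegrable
      (right_mem_Icc.2 hab)).norm.absolutelyContinuousOnInterval_intervalIntegral
        left_mem_uIcc).const_mul (K : ℝ)
  refine isACCurve_of_dist_le hab hφ fun s hs t ht => ?_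
  rw [uIcc_of_le hab] at hs ht
  rw [Real.dist_eq, ← mul_sub, abs_mul, NNReal.abs_eq, dist_eq_norm]
  exact (hT.norm_sub_le _ _).trans (mul_le_mul_of_nonneg_left (hg.norm_sub_le hs ht) K.2)

end RadonNikodym

section Action

variable {E : Type*} [NormedAddCommGroup E] {a b : ℝ}

lemma tendsto_lintegral_enorm_sq_comp {F α : Type*} [NormedAddCommGroup F] [TopologicalSpace α]
    [T2Space α] [MeasurableSpace α] [OpensMeasurableSpace α] {ν : Measure α}
    [IsFiniteMeasureOnCompacts ν] {V : ℕ → E → F} {W : E → F} {K : NNReal}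
    (hV : ∀ n, LipschitzWith K (V n)) (hlim : ∀ x, Tendsto (fun n => V n x) atTop (𝓝 (W x)))
    {s : Set α} (hs : IsCompact s) {γ : α → E} (hγ : ContinuousOn γ s) :
    Tendsto (fun n => ∫⁻ t in s, ‖V n (γ t)‖ₑ ^ 2 ∂ν) atTop
      (𝓝 (∫⁻ t in s, ‖W (γ t)‖ₑ ^ 2 ∂ν)) := by
  obtain ⟨R, hR⟩ := hs.exists_bound_of_continuousOn hγ
  obtain ⟨M, hM⟩ := (hlim 0).norm.bddAbove_range
  have hbound : ∀ n, ∀ t ∈ s, ‖V n (γ t)‖ ≤ M + K * R := fun n t ht => by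
    calc ‖V n (γ t)‖ ≤ ‖V n 0‖ + ‖V n (γ t) - V n 0‖ := norm_le_norm_add_norm_sub' _ _
      _ ≤ M + K * ‖γ t - 0‖ := add_le_add (hM (mem_range_self n)) ((hV n).norm_sub_le _ _)
      _ ≤ M + K * R := by
        rw [sub_zero]
        gcongr
        exact hR t ht
  refine tendsto_lintegral_of_dominated_convergence' (fun _ => ENNReal.ofReal (M + K * R) ^ 2)
    (fun n => ?_) (fun n => ?_) ?_
    (Eventually.of_forall fun t => ((ENNReal.continuous_pow 2).tendsto _).comp (hlim (γ t)).enorm)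
  · exact (((hV n).continuous.comp_continuousOn hγ).enorm.aemeasurable
      hs.measurableSet).pow_const 2
  · filter_upwards [ae_restrict_mem hs.measurableSet] with t ht
    rw [← ofReal_norm]
    gcongr
    exact hbound n t ht
  · rw [setLIntegral_const]
    exact ENNReal.mul_ne_top (ENNReal.pow_ne_top ENNReal.ofReal_ne_top) hs.measure_lt_top.ne

variable [InnerProductSpace ℝ E] [CompleteSpace E] {f : E → EReal} {lam τ : ℝ} {γ g : ℝ → E}

lemma actionFn_eq_lintegral (hg : IsACDensity a b γ g) (hab : a ≤ b) :
    actionFn lam f a b γ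
      = ∫⁻ t in Icc a b, (‖g t‖ₑ ^ 2 + gradNorm lam f (γ t) ^ 2) := by
  have hAC : IsACCurve a b γ := ⟨g, hg⟩
  rw [actionFn, dif_pos hAC, restrict_Ioc_eq_restrict_Icc]
  refine lintegral_congr_ae ?_
  filter_upwards [IsACDensity.ae_eq hAC.choose_spec hg hab] with t ht
  rw [ht, ENNReal.ofReal_pow (norm_nonneg _), ofReal_norm]

lemma actionFn_Jres_le (hp : ProperFn f) (hc : LambdaConvex lam f) (hl : LowerSemicontinuous f)
    (hτ : 0 < τ) (hadm : 0 < 1 + τ * lam) (hg : IsACDensity a b γ g) (hab : a ≤ b) :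
    actionFn lam f a b (fun t => Jres f τ (γ t))
      ≤ (∫⁻ t in Icc a b, (ENNReal.ofReal (1 + τ * lam)⁻¹ * ‖g t‖ₑ) ^ 2)
        + ∫⁻ t in Icc a b, ‖yosida f τ (γ t)‖ₑ ^ 2 := by
  have hlip := lipschitzWith_Jres hp hc hl hτ hadm
  obtain ⟨k, hk⟩ : ∃ k, IsACDensity a b (Jres f τ ∘ γ) k :=
    isACCurve_comp_of_lipschitzWith hlip hg hab
  calc actionFn lam f a b (fun t => Jres f τ (γ t))
      = ∫⁻ t in Icc a b, (‖k t‖ₑ ^ 2 + gradNorm lam f (Jres f τ (γ t)) ^ 2) :=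
        actionFn_eq_lintegral hk hab
    _ ≤ ∫⁻ t in Icc a b,
          ((ENNReal.ofReal (1 + τ * lam)⁻¹ * ‖g t‖ₑ) ^ 2 + ‖yosida f τ (γ t)‖ₑ ^ 2) := by
        refine lintegral_mono_ae ?_
        filter_upwards [hg.ae_enorm_le_of_lipschitzWith hlip hk hab] with t ht
        exact add_le_add (pow_le_pow_left' ht 2)
          (pow_le_pow_left' (gradNorm_Jres_le hp hc hl hτ hadm (γ t)) 2)
    _ = _ := lintegral_add_left' ((hg.1.aestronglyMeasurable.enorm.const_mul _).pow_const 2) _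

lemma lintegral_add_lintegral_yosida_le (hp : ProperFn f) (hc : LambdaConvex lam f)
    (hl : LowerSemicontinuous f) (hτ : 0 < τ) (hadm : 0 < 1 + τ * lam)
    (hg : IsACDensity a b γ g) (hab : a ≤ b) :
    (∫⁻ t in Icc a b, (ENNReal.ofReal (1 + τ * lam)⁻¹ * ‖g t‖ₑ) ^ 2)
        + ∫⁻ t in Icc a b, ‖yosida f τ (γ t)‖ₑ ^ 2
      ≤ ENNReal.ofReal ((1 + τ * lam)⁻¹ ^ 2) * actionFn lam f a b γ := by
  rw [actionFn_eq_lintegral hg hab, ENNReal.ofReal_pow (inv_nonneg.2 hadm.le),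
    ← lintegral_const_mul' _ _ (ENNReal.pow_ne_top ENNReal.ofReal_ne_top),
    ← lintegral_add_left' ((hg.1.aestronglyMeasurable.enorm.const_mul _).pow_const 2)]
  refine lintegral_mono fun t => ?_
  rw [mul_add, ← mul_pow, ← mul_pow]
  exact add_le_add_right (pow_le_pow_left' (enorm_yosida_le hp hc hl hτ hadm (γ t)) 2) _

end Action

theorem statement19_general {a b : ℝ} (hab : a ≤ b) (lam : ℝ) (fh : ℕ → H → EReal) (f : H → EReal)
    (hfh_proper : ∀ h, ProperFn (fh h)) (hfh_conv : ∀ h, LambdaConvex lam (fh h))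
    (hfh_lsc : ∀ h, LowerSemicontinuous (fh h))
    (hf_proper : ProperFn f) (hf_conv : LambdaConvex lam f) (hf_lsc : LowerSemicontinuous f)
    (hM : Mosco fh f) (τ : ℝ) (hτ : 0 < τ) (hadm : lam < 0 → τ < -1 / lam)
    (γ : ℝ → H) (hAC : IsACCurve a b γ) :
    (∀ h, IsACCurve a b (fun t => Jres (fh h) τ (γ t))) ∧
    Filter.limsup (fun h => actionFn lam (fh h) a b (fun t => Jres (fh h) τ (γ t))) atTop
      ≤ ENNReal.ofReal ((1 + τ * lam)⁻¹ ^ 2) * actionFn lam f a b γ := by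
  obtain ⟨g, hg⟩ : ∃ g, IsACDensity a b γ g := hAC
  have hpos := one_add_mul_pos_of_lt_neg_one_div hτ hadm
  have hJlip h := lipschitzWith_Jres (hfh_proper h) (hfh_conv h) (hfh_lsc h) hτ hpos
  refine ⟨fun h => isACCurve_comp_of_lipschitzWith (hJlip h) hg hab, ?_⟩
  have hyosida : Tendsto (fun h => ∫⁻ t in Icc a b, ‖yosida (fh h) τ (γ t)‖ₑ ^ 2) atTop
      (𝓝 (∫⁻ t in Icc a b, ‖yosida f τ (γ t)‖ₑ ^ 2)) :=
    tendsto_lintegral_enorm_sq_comp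
      (fun h => lipschitzWith_yosida (hfh_proper h) (hfh_conv h) (hfh_lsc h) hτ hpos)
      (hM.tendsto_yosida hfh_proper hfh_conv hfh_lsc hf_proper hf_conv hf_lsc hτ hpos)
      isCompact_Icc (hg.continuousOn hab)
  calc limsup (fun h => actionFn lam (fh h) a b (fun t => Jres (fh h) τ (γ t))) atTop
      ≤ limsup (fun h => (∫⁻ t in Icc a b, (ENNReal.ofReal (1 + τ * lam)⁻¹ * ‖g t‖ₑ) ^ 2)
          + ∫⁻ t in Icc a b, ‖yosida (fh h) τ (γ t)‖ₑ ^ 2) atTop :=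
        limsup_le_limsup (Eventually.of_forall fun h =>
          actionFn_Jres_le (hfh_proper h) (hfh_conv h) (hfh_lsc h) hτ hpos hg hab)
    _ = (∫⁻ t in Icc a b, (ENNReal.ofReal (1 + τ * lam)⁻¹ * ‖g t‖ₑ) ^ 2)
          + ∫⁻ t in Icc a b, ‖yosida f τ (γ t)‖ₑ ^ 2 := (hyosida.const_add _).limsup_eq
    _ ≤ _ := lintegral_add_lintegral_yosida_le hf_proper hf_conv hf_lsc hτ hpos hg hab

/-- limsup inequality for the actions of the resolvent-regularized curves. -/
theorem statement19 (lam : ℝ) (fh : ℕ → H → EReal) (f : H → EReal)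
    (hfh_proper : ∀ h, ProperFn (fh h)) (hfh_conv : ∀ h, LambdaConvex lam (fh h))
    (hfh_lsc : ∀ h, LowerSemicontinuous (fh h))
    (hf_proper : ProperFn f) (hf_conv : LambdaConvex lam f) (hf_lsc : LowerSemicontinuous f)
    (hM : Mosco fh f)
    (τ : ℝ) (hτ : 0 < τ) (hadm : lam < 0 → τ < -1 / lam)
    (γ : ℝ → H) (hAC : IsACCurve 0 1 γ) (hfin : actionFn lam f 0 1 γ ≠ ⊤) :
    (∀ h, IsACCurve 0 1 (fun t => Jres (fh h) τ (γ t))) ∧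
    Filter.limsup (fun h => actionFn lam (fh h) 0 1 (fun t => Jres (fh h) τ (γ t))) atTop
      ≤ ENNReal.ofReal ((1 + τ * lam)⁻¹ ^ 2) * actionFn lam f 0 1 γ :=
  statement19_general zero_le_one lam fh f hfh_proper hfh_conv hfh_lsc hf_proper hf_conv hf_lsc hM τ
    hτ hadm γ hAC

end
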